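/- Fix a field k and integers s, p with s ≥ 1. Let φ : E' → E be a morphism of homologically graded spectral sequences of k-vector spaces starting at page s, such that φ^s_{m,q} : E'^s_{m,q} → E^s_{m,q} is an isomorphism for all m ≤ p and all q, and E'^s_{m,q} = 0 for all m > p and all q. For an integer i ≥ s and a bidegree (m,q) with m ≤ p, let Im(d^i_c)_{m,q} denote the subspace d^i(E^i_{m+i, q−i+1}) of E^i_{m,q} if m + i > p, and the zero space if m + i ≤ p (i.e., the image in bidegree (m,q) of the restriction of the differential of E to filtration degrees > p). Then for every r ≥ s, every m ≤ p and every q, the map φ^r_{m,q} : E'^r_{m,q} → E^r_{m,q} is surjective and there is an isomorphism of k-vector spaces E'^r_{m,q} ≅ E^r_{m,q} ⊕ (⊕_{s ≤ i < r} Im(d^i_c)_{m,q}) under which φ^r_{m,q} corresponds to the projection onto the first summand. -/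

import Mathlib

universe u

/-- A homologically graded spectral sequence of `k`-vector spaces starting at page `s`:
`k`-vector spaces `E^r_{m,q}` for `r ≥ s` (here given for all `r ∈ ℤ`; only the pages
`r ≥ s` are constrained), differentials `d^r : E^r_{m,q} → E^r_{m-r,q+r-1}` (formalized,
as for `HomologicalComplex`, as maps `E^r_{m,q} → E^r_{m',q'}` vanishing unless
`m' = m - r` and `q' = q + r - 1`) with `d^r ∘ d^r = 0`, and specified isomorphisms
`E^{r+1}_{m,q} ≅ ker(d^r : E^r_{m,q} → E^r_{m-r,q+r-1}) / im(d^r : E^r_{m+r,q-r+1} → E^r_{m,q})`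
for `r ≥ s`. -/
structure SpectralSequence (k : Type*) [Field k] (s : ℤ) where
  /-- the pages -/
  E : ℤ → ℤ → ℤ → Type u
  [acg : ∀ r m q : ℤ, AddCommGroup (E r m q)]
  [mod : ∀ r m q : ℤ, Module k (E r m q)]
  /-- the differentials -/
  d : ∀ r m q m' q' : ℤ, E r m q →ₗ[k] E r m' q'
  d_shape : ∀ r m q m' q' : ℤ, ¬(m' = m - r ∧ q' = q + r - 1) → d r m q m' q' = 0
  d_comp_d : ∀ r m q m' q' m'' q'' : ℤ, (d r m' q' m'' q'').comp (d r m q m' q') = 0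
  /-- the specified isomorphisms of each page `r + 1` (for `r ≥ s`) with the homology
  of page `r` -/
  iso : ∀ (r m q : ℤ), s ≤ r →
    E (r + 1) m q ≃ₗ[k]
      (LinearMap.ker (d r m q (m - r) (q + r - 1)) ⧸
        Submodule.comap (LinearMap.ker (d r m q (m - r) (q + r - 1))).subtype
          (LinearMap.range (d r (m + r) (q - r + 1) m q)))

attribute [instance] SpectralSequence.acg SpectralSequence.mod

/-- A morphism of spectral sequences: `k`-linear maps on each page commuting with the
differentials and compatible, via the specified isomorphisms, with the maps induced on
homology. -/
structure SpectralSequenceHom {k : Type*} [Field k] {s : ℤ}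
    (E' E : SpectralSequence.{u} k s) where
  /-- the maps on each page -/
  φ : ∀ r m q : ℤ, E'.E r m q →ₗ[k] E.E r m q
  comm : ∀ r m q m' q' : ℤ,
    (E.d r m q m' q').comp (φ r m q) = (φ r m' q').comp (E'.d r m q m' q')
  compat : ∀ (r m q : ℤ) (h : s ≤ r)
    (x : LinearMap.ker (E'.d r m q (m - r) (q + r - 1))),
    (E.iso r m q h) (φ (r + 1) m q ((E'.iso r m q h).symm (Submodule.Quotient.mk x))) =
      Submodule.Quotient.mk
        ⟨φ r m q x.1, by
          have h1 := LinearMap.congr_fun (comm r m q (m - r) (q + r - 1)) x.1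
          simp only [LinearMap.coe_comp, Function.comp_apply] at h1
          have h2 : (E'.d r m q (m - r) (q + r - 1)) x.1 = 0 := x.2
          rw [LinearMap.mem_ker, h1, h2, map_zero]⟩

/-- `Im(d^i_c)_{m,q}`: the image in bidegree `(m,q)` of the restriction of the
differential `d^i` of `E` to filtration degrees `> p`, i.e.
`d^i(E^i_{m+i,q-i+1}) ⊆ E^i_{m,q}` if `m + i > p` and `0` otherwise. -/
def imDc {k : Type*} [Field k] {s : ℤ} (E : SpectralSequence.{u} k s) (p : ℤ)
    (i m q : ℤ) : Submodule k (E.E i m q) :=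
  if p < m + i then LinearMap.range (E.d i (m + i) (q - i + 1) m q) else ⊥

theorem exists_equiv_prod_ker {k V W : Type*} [Field k] [AddCommGroup V] [Module k V]
    [AddCommGroup W] [Module k W] (f : V →ₗ[k] W) (hf : Function.Surjective f) :
    ∃ e : V ≃ₗ[k] (W × LinearMap.ker f), ∀ x, (e x).1 = f x := by
  obtain ⟨g, hg⟩ := f.exists_rightInverse_of_surjective (LinearMap.range_eq_top.2 hf)
  have hg' : ∀ w, f (g w) = w := fun w => LinearMap.congr_fun hg w
  let π : V →ₗ[k] LinearMap.ker f :=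
    LinearMap.codRestrict (LinearMap.ker f) (LinearMap.id - g.comp f)
      (by intro x; simp [hg'])
  have hπ : ∀ x, ((π x : LinearMap.ker f) : V) = x - g (f x) := fun x => rfl
  refine ⟨LinearEquiv.ofBijective (f.prod π) ⟨?_, ?_⟩, fun x => rfl⟩
  · intro x y h
    have h1 : f x = f y := congrArg Prod.fst h
    have h2 : π x = π y := congrArg Prod.snd h
    have h3 := congrArg Subtype.val h2
    rw [hπ, hπ, h1] at h3
    exact sub_left_injective h3
  · rintro ⟨w, ⟨x, hx⟩⟩
    rw [LinearMap.mem_ker] at hx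
    refine ⟨g w + x, Prod.ext ?_ (Subtype.ext ?_)⟩
    · simp [hg', hx]
    · change ((π (g w + x) : LinearMap.ker f) : V) = x
      rw [hπ]; simp [hg', hx]

theorem exists_pi_equiv {k : Type*} [Field k] (M : ℤ → Type*) [∀ i, AddCommGroup (M i)]
    [∀ i, Module k (M i)] (s r : ℤ) (hr : s ≤ r) :
    Nonempty (((i : (Finset.Ico s (r + 1) : Finset ℤ)) → M i.1) ≃ₗ[k]
      (M r × ((i : (Finset.Ico s r : Finset ℤ)) → M i.1))) := by
  have hmem : ∀ i : (Finset.Ico s r : Finset ℤ), i.1 ∈ Finset.Ico s (r + 1) := by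
    rintro ⟨i, hi⟩
    simp only [Finset.mem_Ico] at hi ⊢
    omega
  have hrm : r ∈ Finset.Ico s (r + 1) := by
    simp only [Finset.mem_Ico]; omega
  let F : ((i : (Finset.Ico s (r + 1) : Finset ℤ)) → M i.1) →ₗ[k]
      (M r × ((i : (Finset.Ico s r : Finset ℤ)) → M i.1)) :=
    { toFun := fun f => (f ⟨r, hrm⟩, fun i => f ⟨i.1, hmem i⟩)
      map_add' := fun _ _ => rfl
      map_smul' := fun _ _ => rfl }
  refine ⟨LinearEquiv.ofBijective F ⟨?_, ?_⟩⟩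
  · intro f g h
    have h1 : f ⟨r, hrm⟩ = g ⟨r, hrm⟩ := congrArg Prod.fst h
    have h2 := congrArg Prod.snd h
    funext ⟨i, hi⟩
    by_cases hir : i = r
    · subst hir; exact h1
    · have hi' : i ∈ Finset.Ico s r := by
        simp only [Finset.mem_Ico] at hi ⊢
        omega
      exact congrFun h2 ⟨i, hi'⟩
  · rintro ⟨a, f⟩
    refine ⟨fun i => if h : i.1 = r then cast (congrArg M h.symm) a else f ⟨i.1, by
      have := i.2
      simp only [Finset.mem_Ico] at this ⊢
      omega⟩, Prod.ext ?_ ?_⟩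
    · simp [F]
    · funext ⟨i, hi⟩
      have : i ≠ r := by
        simp only [Finset.mem_Ico] at hi
        omega
      simp [F, this]

section Step

variable {k : Type*} [Field k] {s : ℤ} {E' E : SpectralSequence.{u} k s}

/-- Every element of the next page is represented by a cycle. -/
theorem exists_rep (E : SpectralSequence.{u} k s) (r m q : ℤ) (h : s ≤ r)
    (x : E.E (r + 1) m q) :
    ∃ y : LinearMap.ker (E.d r m q (m - r) (q + r - 1)),
      x = (E.iso r m q h).symm (Submodule.Quotient.mk y) := by
  obtain ⟨y, hy⟩ := Submodule.Quotient.mk_surjective _ (E.iso r m q h x)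
  exact ⟨y, by rw [hy, LinearEquiv.symm_apply_apply]⟩

theorem rep_eq_zero_iff (E : SpectralSequence.{u} k s) (r m q : ℤ) (h : s ≤ r)
    (y : LinearMap.ker (E.d r m q (m - r) (q + r - 1))) :
    (E.iso r m q h).symm (Submodule.Quotient.mk y) = 0 ↔
      y.1 ∈ LinearMap.range (E.d r (m + r) (q - r + 1) m q) := by
  rw [LinearEquiv.map_eq_zero_iff, Submodule.Quotient.mk_eq_zero]
  rfl

theorem phi_rep_eq_zero_iff (φ : SpectralSequenceHom E' E) (r m q : ℤ) (h : s ≤ r)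
    (y : LinearMap.ker (E'.d r m q (m - r) (q + r - 1))) :
    φ.φ (r + 1) m q ((E'.iso r m q h).symm (Submodule.Quotient.mk y)) = 0 ↔
      φ.φ r m q y.1 ∈ LinearMap.range (E.d r (m + r) (q - r + 1) m q) := by
  rw [← LinearEquiv.map_eq_zero_iff (E.iso r m q h), φ.compat, Submodule.Quotient.mk_eq_zero]
  rfl

theorem comm_apply (φ : SpectralSequenceHom E' E) (r m q m' q' : ℤ) (x : E'.E r m q) :
    E.d r m q m' q' (φ.φ r m q x) = φ.φ r m' q' (E'.d r m q m' q' x) :=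
  LinearMap.congr_fun (φ.comm r m q m' q') x

theorem main_induction {p : ℤ} (hs : 1 ≤ s) (φ : SpectralSequenceHom E' E)
    (hiso : ∀ m q : ℤ, m ≤ p → Function.Bijective (φ.φ s m q))
    (hzero : ∀ m q : ℤ, p < m → ∀ x : E'.E s m q, x = 0)
    (r : ℤ) (hr : s ≤ r) :
    (∀ m q : ℤ, p < m → ∀ x : E'.E r m q, x = 0) ∧
    (∀ m q : ℤ, m ≤ p → Function.Surjective (φ.φ r m q)) ∧
    (∀ m q : ℤ, m + r ≤ p + 1 → ∀ x, φ.φ r m q x = 0 → x = 0) ∧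
    (∀ m q : ℤ, m ≤ p → Nonempty (LinearMap.ker (φ.φ r m q) ≃ₗ[k]
      ((i : (Finset.Ico s r : Finset ℤ)) → imDc E p i.1 m q))) := by
  induction r, hr using Int.leInduction with
  | base =>
    refine ⟨hzero, fun m q hm => (hiso m q hm).2, fun m q hm x hx => ?_, fun m q hm => ?_⟩
    · exact (hiso m q (by omega)).1 (by rw [hx, map_zero])
    · have h1 : Subsingleton (LinearMap.ker (φ.φ s m q)) := by
        rw [LinearMap.ker_eq_bot.2 (hiso m q hm).1]; infer_instance
      have h2 : IsEmpty (Finset.Ico s s : Finset ℤ) :=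
        ⟨fun i => by simpa using i.2⟩
      exact ⟨0, 0, fun _ => Subsingleton.elim _ _, fun _ => Subsingleton.elim _ _⟩
  | succ r hr ih =>
    obtain ⟨ihz, ihs, ihi, ihk⟩ := ih
    -- cycles upstairs are detected by the image
    have cyc : ∀ m q : ℤ, m ≤ p → ∀ x : E'.E r m q,
        E.d r m q (m - r) (q + r - 1) (φ.φ r m q x) = 0 →
        E'.d r m q (m - r) (q + r - 1) x = 0 := by
      intro m q hm x hx
      rw [comm_apply] at hx
      exact ihi _ _ (by omega) _ hx
    have inj : ∀ m q : ℤ, m + (r + 1) ≤ p + 1 → ∀ x, φ.φ (r + 1) m q x = 0 → x = 0 := by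
      intro m q hm x hx
      obtain ⟨y, rfl⟩ := exists_rep E' r m q hr x
      rw [phi_rep_eq_zero_iff] at hx
      rw [rep_eq_zero_iff]
      obtain ⟨z, hz⟩ := hx
      obtain ⟨w, rfl⟩ := ihs _ _ (by omega) z
      rw [comm_apply] at hz
      refine ⟨w, ?_⟩
      rw [← sub_eq_zero]
      exact ihi m q (by omega) _ (by rw [map_sub, hz, sub_self])
    refine ⟨?_, ?_, inj, ?_⟩
    · intro m q hm x
      obtain ⟨y, rfl⟩ := exists_rep E' r m q hr x
      rw [rep_eq_zero_iff, ihz m q hm y.1]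
      exact Submodule.zero_mem _
    · intro m q hm x
      obtain ⟨y, rfl⟩ := exists_rep E r m q hr x
      obtain ⟨w, hw⟩ := ihs m q hm y.1
      have hwc := cyc m q hm w (by rw [hw]; exact y.2)
      refine ⟨(E'.iso r m q hr).symm (Submodule.Quotient.mk ⟨w, hwc⟩), ?_⟩
      rw [LinearEquiv.eq_symm_apply, φ.compat]
      congr 1
      exact Subtype.ext hw
    · intro m q hm
      obtain ⟨e0⟩ := ihk m q hm
      obtain ⟨e1⟩ := exists_pi_equiv (k := k) (fun i => imDc E p i m q) s r hr
      suffices H : Nonempty (LinearMap.ker (φ.φ (r + 1) m q) ≃ₗ[k]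
          (imDc E p r m q × LinearMap.ker (φ.φ r m q))) by
        obtain ⟨e2⟩ := H
        exact ⟨e2.trans (((LinearEquiv.refl k _).prodCongr e0).trans e1.symm)⟩
      by_cases hp : p < m + r
      · have hD : imDc E p r m q = LinearMap.range (E.d r (m + r) (q - r + 1) m q) := if_pos hp
        rw [hD]
        let R := LinearMap.range (E.d r (m + r) (q - r + 1) m q)
        let S : Submodule k (E'.E r m q) := R.comap (φ.φ r m q)
        have hSc : ∀ x : S, E'.d r m q (m - r) (q + r - 1) x.1 = 0 := by
          rintro ⟨x, z, hz⟩
          refine cyc m q hm x ?_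
          rw [← hz]
          exact LinearMap.congr_fun (E.d_comp_d r _ _ _ _ _ _) z
        let ι : S →ₗ[k] LinearMap.ker (E'.d r m q (m - r) (q + r - 1)) :=
          LinearMap.codRestrict _ S.subtype hSc
        let f0 : S →ₗ[k] E'.E (r + 1) m q :=
          (E'.iso r m q hr).symm.toLinearMap.comp ((Submodule.mkQ _).comp ι)
        have hf0 : ∀ x, f0 x = (E'.iso r m q hr).symm (Submodule.Quotient.mk (ι x)) :=
          fun x => rfl
        let f : S →ₗ[k] LinearMap.ker (φ.φ (r + 1) m q) :=
          LinearMap.codRestrict _ f0 (by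
            intro x
            rw [LinearMap.mem_ker, hf0, phi_rep_eq_zero_iff]
            exact x.2)
        have hfb : Function.Bijective f := by
          constructor
          · rw [injective_iff_map_eq_zero]
            intro x hx
            have hx' : f0 x = 0 := congrArg Subtype.val hx
            rw [hf0, rep_eq_zero_iff] at hx'
            obtain ⟨z, hz⟩ := hx'
            rw [ihz _ _ hp z, map_zero] at hz
            exact Subtype.ext hz.symm
          · rintro ⟨x, hx⟩
            rw [LinearMap.mem_ker] at hx
            obtain ⟨y, rfl⟩ := exists_rep E' r m q hr x
            rw [phi_rep_eq_zero_iff] at hx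
            exact ⟨⟨y.1, hx⟩, rfl⟩
        let g : S →ₗ[k] R := (φ.φ r m q).restrict (fun x hx => hx)
        have hg : Function.Surjective g := by
          rintro ⟨y, hy⟩
          obtain ⟨x, rfl⟩ := ihs m q hm y
          exact ⟨⟨x, hy⟩, rfl⟩
        obtain ⟨e3, -⟩ := exists_equiv_prod_ker g hg
        let j : LinearMap.ker g →ₗ[k] LinearMap.ker (φ.φ r m q) :=
          LinearMap.codRestrict _ (S.subtype.comp (LinearMap.ker g).subtype) (by
            rintro ⟨x, hx⟩
            exact congrArg Subtype.val hx)
        have hj : Function.Bijective j := by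
          constructor
          · intro x y h
            have h' : x.1.1 = y.1.1 := congrArg (fun z => z.1) h
            exact Subtype.ext (Subtype.ext h')
          · rintro ⟨x, hx⟩
            rw [LinearMap.mem_ker] at hx
            have hxS : x ∈ S := by
              change φ.φ r m q x ∈ R
              rw [hx]; exact Submodule.zero_mem _
            exact ⟨⟨⟨x, hxS⟩, Subtype.ext hx⟩, rfl⟩
        exact ⟨(LinearEquiv.ofBijective f hfb).symm.trans
          (e3.trans ((LinearEquiv.refl k _).prodCongr (LinearEquiv.ofBijective j hj)))⟩
      · have hD : imDc E p r m q = ⊥ := if_neg hp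
        rw [hD]
        have h1 : LinearMap.ker (φ.φ (r + 1) m q) = ⊥ :=
          LinearMap.ker_eq_bot'.2 (inj m q (by omega))
        have h2 : LinearMap.ker (φ.φ r m q) = ⊥ :=
          LinearMap.ker_eq_bot'.2 (ihi m q (by omega))
        rw [h1, h2]
        exact ⟨0, 0, fun _ => Subsingleton.elim _ _, fun _ => Subsingleton.elim _ _⟩

end Step

theorem spectral_sequence_comparison_below
    {k : Type*} [Field k] {s p : ℤ} (hs : 1 ≤ s)
    (E' E : SpectralSequence.{u} k s) (φ : SpectralSequenceHom E' E)
    (hiso : ∀ m q : ℤ, m ≤ p → Function.Bijective (φ.φ s m q))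
    (hzero : ∀ m q : ℤ, p < m → ∀ x : E'.E s m q, x = 0)
    (r : ℤ) (hr : s ≤ r) (m q : ℤ) (hm : m ≤ p) :
    Function.Surjective (φ.φ r m q) ∧
    ∃ e : E'.E r m q ≃ₗ[k]
        (E.E r m q × ((i : (Finset.Ico s r : Finset ℤ)) → imDc E p i.1 m q)),
      ∀ x : E'.E r m q, (e x).1 = φ.φ r m q x := by
  obtain ⟨-, h2, -, h4⟩ := main_induction hs φ hiso hzero r hr
  refine ⟨h2 m q hm, ?_⟩
  obtain ⟨e0⟩ := h4 m q hm
  obtain ⟨e, he⟩ := exists_equiv_prod_ker (φ.φ r m q) (h2 m q hm)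
  exact ⟨e.trans ((LinearEquiv.refl k _).prodCongr e0), fun x => he x⟩
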